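/- Let φ be continuous on Σ^β with ‖φ‖_δ < ∞. For a word w ∈ L^β_m, let w^♯ ∈ Σ^β be the configuration with w^♯_j = w_j for 1 ≤ j ≤ m and w^♯_j = 0 for all other j ∈ ℤ. Then the pressure satisfies p(φ) = lim_{m→∞} (1/m) · ln ∑_{w∈L^β_m : s(w)=ε} exp(∑_{j=1}^{m} φ(T^j w^♯)). -/

import Mathlib

/-!
Write `Z_m` for the sum of `exp(∑_{j=1}^m φ(T^j w^♯))` over all words `w ∈ L^β_m`, and `Z*_m` for the
sum over those with `s(w) = ε`. Translating the window `[-n, n]` to `[1, 2n+1]` gives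
`Ξ^n(φ) = Z_{2n+1}` (`XiAll_eq`), so `Z*_m` has to be compared with `Z_m`.

The shift `X^β` is closed under lowering letters. Take a nonzero `w ∈ L^β_m` and lower its last
nonzero letter by one. A suffix that contains this letter was at most the prefix of `c^β` of its
length, hence is now strictly smaller, and any other suffix consists of zeros whereas `c_1 ≥ 1`.
The new word therefore has `s = ε` (`sfx_lower`). The original word is recovered from the new one and
the place of the change, so at most `m` words have the same image, and since only one site is
altered the exponent changes by at most the (finite) oscillation norm of an extension of `φ`
(`exists_bound`). Hence `Z*_m ≤ Z_m ≤ (1 + m e^D) Z*_m` (`wordXi_le`), and the factor disappears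
after taking `(1/m) ln`.

Only odd `m` occur in `Ξ^n`. For even `m`, appending a zero gives `Z*_m ≤ e^D Z*_{m+1}`
(`wordXi_succ`), which sandwiches `Z*_m` between its two odd neighbours.
-/

open MeasureTheory Filter
open scoped ENNReal

noncomputable section

/-- Remainders of the β-expansion algorithm: `betaR β i = r_i`. -/
def betaR (β : ℝ) : ℕ → ℝ
  | 0 => 1
  | i + 1 => β * betaR β i - ((⌈β * betaR β i⌉ : ℝ) - 1)

/-- Digits of the β-expansion of 1: `betaC β i = c_{i+1}` (0-indexed). -/
def betaC (β : ℝ) (i : ℕ) : ℕ := (⌈β * betaR β i⌉ - 1).toNat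

/-- Lexicographic order on one-sided sequences: `x ⪯ y`. -/
def lexLe (x y : ℕ → ℕ) : Prop :=
  x = y ∨ ∃ i, (∀ j, j < i → x j = y j) ∧ x i < y i

/-- The one-sided β-shift `X^β`. -/
def betaX (β : ℝ) : Set (ℕ → ℕ) :=
  {x | (∀ i, (x i : ℤ) < ⌈β⌉) ∧ ∀ k : ℕ, lexLe (fun i => x (k + i)) (betaC β)}

/-- The language `L^β`: finite words occurring in elements of `X^β`. -/
def betaLang (β : ℝ) : Set (List ℕ) :=
  {w | ∃ x ∈ betaX β, ∃ k : ℕ, ∀ i, i < w.length → w.getD i 0 = x (k + i)}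

/-- The set `P^β` of (finite) prefixes of `c^β`, including the empty word. -/
def betaPref (β : ℝ) : Set (List ℕ) :=
  {u | ∀ i, i < u.length → u.getD i 0 = betaC β i}

/-- The length of the longest suffix of `w` belonging to `P^β`. -/
def sLen (β : ℝ) (w : List ℕ) : ℕ :=
  sSup {ℓ | ℓ ≤ w.length ∧ w.drop (w.length - ℓ) ∈ betaPref β}

/-- `s(w)`: the longest suffix of `w` belonging to `P^β`. -/
def sfx (β : ℝ) (w : List ℕ) : List ℕ := w.drop (w.length - sLen β w)

/-- The word `v` in the decomposition `w = v · s(w)`. -/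
def vprefix (β : ℝ) (w : List ℕ) : List ℕ := w.take (w.length - sLen β w)

/-- Index of the last nonzero letter of a word. -/
def lastNonzeroIdx (u : List ℕ) : ℕ := sSup {j | j < u.length ∧ u.getD j 0 ≠ 0}

/-- The hat operation on a prefix of `c^β`: decrease the last nonzero letter by 1. -/
def hatPrefix (u : List ℕ) : List ℕ :=
  u.set (lastNonzeroIdx u) (u.getD (lastNonzeroIdx u) 0 - 1)

/-- The hat map `w ↦ ŵ` on words: `ŵ = v · (s(w))^`. -/
def hatW (β : ℝ) (w : List ℕ) : List ℕ := vprefix β w ++ hatPrefix (sfx β w)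

/-- `z^β(u)` for `u ∈ P^β`: the number of zero digits of `c^β` following the prefix `u`. -/
def zPref (β : ℝ) (u : List ℕ) : ℕ :=
  if u = [] then 0 else sInf {p | betaC β (u.length + p) ≠ 0}

/-- `z^β(w) = z^β(s(w))` for an arbitrary word. -/
def zW (β : ℝ) (w : List ℕ) : ℕ := zPref β (sfx β w)

/-- `z̄^β(n)`: the maximum of `z^β(u)` over prefixes `u` of `c^β` with `|u| ≤ n`. -/
def zbar (β : ℝ) (n : ℕ) : ℕ :=
  Finset.sup (Finset.range (n + 1)) (fun k => zPref β ((List.range k).map (betaC β)))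

/-- The natural extension `Σ^β` (two-sided β-shift). -/
def betaSigma (β : ℝ) : Set (ℤ → ℕ) :=
  {x | ∀ k : ℤ, (fun i : ℕ => x (k + i)) ∈ betaX β}

/-- The left shift `T^j` on two-sided sequences. -/
def shiftZ (j : ℤ) (x : ℤ → ℕ) : ℤ → ℕ := fun i => x (i + j)

/-- Alphabet size `b = ⌈β⌉`. -/
def bA (β : ℝ) : ℕ := (⌈β⌉).toNat

/-- The full shift `A^ℤ` over the alphabet `{0, …, b-1}`. -/
def fullShift (b : ℕ) : Set (ℤ → ℕ) := {x | ∀ i, x i < b}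

/-- Oscillation `δ_i(g)` of a function on the full shift at site `i`. -/
def deltaOsc (b : ℕ) (g : (ℤ → ℕ) → ℝ) (i : ℤ) : ℝ≥0∞ :=
  sSup {d | ∃ x ∈ fullShift b, ∃ y ∈ fullShift b,
    (∀ k : ℤ, k ≠ i → x k = y k) ∧ d = ENNReal.ofReal |g x - g y|}

/-- `‖g‖_δ = ∑_{i ∈ ℤ} δ_i(g)` for a function on the full shift. -/
def normDeltaBar (b : ℕ) (g : (ℤ → ℕ) → ℝ) : ℝ≥0∞ := ∑' i : ℤ, deltaOsc b g i

/-- `‖φ‖_δ` for a function on `Σ^β`: infimum over continuous extensions to the full shift. -/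
def normDelta (β : ℝ) (φ : (ℤ → ℕ) → ℝ) : ℝ≥0∞ :=
  ⨅ g : {g : (ℤ → ℕ) → ℝ // ContinuousOn g (fullShift (bA β)) ∧
    Set.EqOn g φ (betaSigma β)}, normDeltaBar (bA β) g.val

/-- The word read in the window `[-n, n]` of a two-sided configuration. -/
def wordOf (n : ℕ) (x : ℤ → ℕ) : List ℕ :=
  (List.range (2 * n + 1)).map (fun i => x (-(n : ℤ) + i))

/-- `L^β_m`: words of the language of length `m`. -/
def betaLangN (β : ℝ) (m : ℕ) : Set (List ℕ) := {w | w ∈ betaLang β ∧ w.length = m}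

/-- The defining properties of the set `E^n ⊆ Σ^β`. -/
def IsEn (β : ℝ) (n : ℕ) (E : Finset (ℤ → ℕ)) : Prop :=
  (∀ x ∈ E, x ∈ betaSigma β) ∧
  (∀ x ∈ E, ∀ j : ℤ, (n : ℤ) < |j| → x j = 0) ∧
  Set.BijOn (wordOf n) E (betaLangN β (2 * n + 1))

/-- Birkhoff sum `∑_{j=-n}^n φ(T^j x)`. -/
def birkhoff (φ : (ℤ → ℕ) → ℝ) (n : ℕ) (x : ℤ → ℕ) : ℝ :=
  ∑ j ∈ Finset.Icc (-(n : ℤ)) (n : ℤ), φ (shiftZ j x)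

/-- Partition function `Ξ^n(φ)`. -/
def XiAll (φ : (ℤ → ℕ) → ℝ) (n : ℕ) (E : Finset (ℤ → ℕ)) : ℝ :=
  ∑ x ∈ E, Real.exp (birkhoff φ n x)

/-- `x` matches the word `v` on the window starting at `k`. -/
def matchesAt (x : ℤ → ℕ) (k : ℤ) (v : List ℕ) : Prop :=
  ∀ i : ℕ, i < v.length → x (k + i) = v.getD i 0

/-- `s(x^-_k) = ε`: no nonempty suffix of `(…, x_{k-2}, x_{k-1})` is a prefix of `c^β`. -/
def leftFree (β : ℝ) (x : ℤ → ℕ) (k : ℤ) : Prop :=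
  ∀ ℓ : ℕ, 1 ≤ ℓ → ((List.range ℓ).map (fun i => x (k - ℓ + i))) ∉ betaPref β

open Classical in
/-- Restricted partition function `Ξ^n_{[k,ℓ]}(v)` (with `ℓ = k + |v| - 1`). -/
def XiV (φ : (ℤ → ℕ) → ℝ) (n : ℕ) (E : Finset (ℤ → ℕ)) (k : ℤ) (v : List ℕ) : ℝ :=
  ∑ x ∈ E, if matchesAt x k v then Real.exp (birkhoff φ n x) else 0

open Classical in
/-- Restricted partition function `Ξ^{*,n}_{[k,ℓ]}(v)`: additionally `s(x^-_k) = ε`. -/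
def XiStarV (β : ℝ) (φ : (ℤ → ℕ) → ℝ) (n : ℕ) (E : Finset (ℤ → ℕ)) (k : ℤ)
    (v : List ℕ) : ℝ :=
  ∑ x ∈ E, if matchesAt x k v ∧ leftFree β x k then Real.exp (birkhoff φ n x) else 0

/-- The sequence `(2n+1)^{-1} ln Ξ^n(φ)` whose limit is the pressure. -/
def pressureSeq (φ : (ℤ → ℕ) → ℝ) (E : ℕ → Finset (ℤ → ℕ)) (n : ℕ) : ℝ :=
  (2 * (n : ℝ) + 1)⁻¹ * Real.log (XiAll φ n (E n))

/-- The pressure `p(φ)` (limit of `pressureSeq`). -/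
def pressureLim (φ : (ℤ → ℕ) → ℝ) (E : ℕ → Finset (ℤ → ℕ)) : ℝ :=
  limUnder atTop (pressureSeq φ E)

/-- The left shift on `Σ^β`. -/
def shiftSigma (β : ℝ) (x : ↥(betaSigma β)) : ↥(betaSigma β) :=
  ⟨shiftZ 1 x.val, by
    intro k
    have h := x.prop (k + 1)
    have he : (fun i : ℕ => shiftZ 1 x.val (k + i)) = fun i : ℕ => x.val (k + 1 + i) := by
      funext i
      simp only [shiftZ]
      ring_nf
    rw [he]
    exact h⟩

/-- `ν` is an equilibrium measure for `φ`, i.e. a shift-invariant probability measure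
that is a tangent functional to the pressure at `φ`. -/
def IsEquilibrium (β : ℝ) (E : ℕ → Finset (ℤ → ℕ)) (φ : (ℤ → ℕ) → ℝ)
    (ν : Measure ↥(betaSigma β)) : Prop :=
  IsProbabilityMeasure ν ∧ ν.map (shiftSigma β) = ν ∧
  ∀ f : (ℤ → ℕ) → ℝ, ContinuousOn f (betaSigma β) →
    pressureLim φ E + ∫ x, f x.val ∂ν ≤ pressureLim (fun z => φ z + f z) E

/-- The cylinder set `{x ∈ Σ^β : x_1 ⋯ x_m = u}`. -/
def cylOne (β : ℝ) (m : ℕ) (u : List ℕ) : Set ↥(betaSigma β) :=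
  {x | ∀ i : ℕ, i < m → x.val (1 + (i : ℤ)) = u.getD i 0}

/-- The cylinder set `[x_0 ⋯ x_{m-1}]`. -/
def cylZero (β : ℝ) (m : ℕ) (x : ↥(betaSigma β)) : Set ↥(betaSigma β) :=
  {y | ∀ i : ℕ, i < m → y.val (i : ℤ) = x.val (i : ℤ)}

/-- `ν` is a weak Gibbs measure for the continuous function `ψ`. -/
def IsWeakGibbs (β : ℝ) (ν : Measure ↥(betaSigma β)) (ψ : (ℤ → ℕ) → ℝ) : Prop :=
  ∀ δ : ℝ, 0 < δ → ∃ N : ℕ, ∀ m : ℕ, N ≤ m → ∀ x : ↥(betaSigma β),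
    |(m : ℝ)⁻¹ * Real.log (ν (cylZero β m x)).toReal
      - (m : ℝ)⁻¹ * ∑ ℓ ∈ Finset.range m, ψ (shiftZ (ℓ : ℤ) x.val)| ≤ δ

/-- `w^♯`: the two-sided configuration equal to `w` on positions `1, …, |w|` and `0` elsewhere. -/
def sharp (w : List ℕ) : ℤ → ℕ :=
  fun j => if 1 ≤ j ∧ j ≤ (w.length : ℤ) then w.getD (j - 1).toNat 0 else 0

/-! ### Lexicographic order and the β-shift -/

lemma lexLe_of_le {x y : ℕ → ℕ} (h : ∀ i, x i ≤ y i) : lexLe x y := by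
  classical
  by_cases hxy : x = y
  · exact Or.inl hxy
  · have hex : ∃ i, x i ≠ y i := by
      by_contra! hc
      exact hxy (funext hc)
    refine Or.inr ⟨Nat.find hex, fun j hj => ?_, ?_⟩
    · simpa using Nat.find_min hex hj
    · exact lt_of_le_of_ne (h _) (Nat.find_spec hex)

lemma lexLe_trans {x y z : ℕ → ℕ} (h₁ : lexLe x y) (h₂ : lexLe y z) : lexLe x z := by
  rcases h₁ with rfl | ⟨i, hi, hi'⟩
  · exact h₂
  rcases h₂ with rfl | ⟨j, hj, hj'⟩
  · exact Or.inr ⟨i, hi, hi'⟩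
  refine Or.inr ⟨min i j, fun l hl => ?_, ?_⟩
  · rw [hi l (by omega), hj l (by omega)]
  · rcases lt_trichotomy i j with h | rfl | h
    · rw [min_eq_left h.le, ← hj i h]; exact hi'
    · rw [min_self]; exact hi'.trans hj'
    · rw [min_eq_right h.le, hi j h]; exact hj'

lemma two_le_ceil {β : ℝ} (hβ : 1 < β) : 2 ≤ ⌈β⌉ := by
  have : (1 : ℤ) < ⌈β⌉ := Int.lt_ceil.2 (by exact_mod_cast hβ)
  omega

lemma betaC_pos {β : ℝ} (hβ : 1 < β) : 0 < betaC β 0 := by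
  have := two_le_ceil hβ
  simp only [betaC, betaR, mul_one]
  omega

lemma betaX_mono {β : ℝ} {x y : ℕ → ℕ} (hy : y ∈ betaX β) (h : ∀ i, x i ≤ y i) :
    x ∈ betaX β :=
  ⟨fun i => lt_of_le_of_lt (by exact_mod_cast h i) (hy.1 i),
    fun k => lexLe_trans (lexLe_of_le fun i => h (k + i)) (hy.2 k)⟩

lemma sharp_one_add (w : List ℕ) (i : ℕ) : sharp w (1 + i) = w.getD i 0 := by
  unfold sharp
  split_ifs with h
  · congr 1; omega
  · rw [List.getD_eq_default]; omega

lemma sharp_eq_getD (w : List ℕ) {k : ℤ} (hk : 1 ≤ k) : sharp w k = w.getD (k - 1).toNat 0 := by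
  rw [← sharp_one_add]; congr 1; omega

lemma sharp_of_nonpos (w : List ℕ) {k : ℤ} (hk : k ≤ 0) : sharp w k = 0 := by
  unfold sharp
  rw [if_neg (by omega)]

/-- A word of the language followed by zeros is dominated, site by site, by an element of `X^β`. -/
lemma exists_dom {β : ℝ} {w : List ℕ} (hw : w ∈ betaLang β) :
    ∃ x ∈ betaX β, ∃ k, ∀ i, w.getD i 0 ≤ x (k + i) := by
  obtain ⟨x, hx, k, h⟩ := hw
  refine ⟨x, hx, k, fun i => ?_⟩
  by_cases hi : i < w.length
  · exact (h i hi).le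
  · rw [List.getD_eq_default _ _ (by omega)]; exact Nat.zero_le _

lemma sharp_lexLe {β : ℝ} (hβ : 1 < β) {w : List ℕ} (hw : w ∈ betaLang β) (k : ℤ) :
    lexLe (fun i : ℕ => sharp w (k + i)) (betaC β) := by
  by_cases hk : 1 ≤ k
  · obtain ⟨x, hx, k₀, h⟩ := exists_dom hw
    refine lexLe_trans (lexLe_of_le fun i => ?_) (hx.2 (k₀ + (k - 1).toNat))
    have := h ((k - 1).toNat + i)
    rw [← add_assoc] at this
    refine le_trans (le_of_eq ?_) this
    rw [sharp_eq_getD _ (by omega)]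
    congr 1; omega
  · refine Or.inr ⟨0, by simp, ?_⟩
    simp only [Nat.cast_zero, add_zero]
    rw [sharp_of_nonpos _ (by omega)]
    exact betaC_pos hβ

lemma sharp_mem {β : ℝ} (hβ : 1 < β) {w : List ℕ} (hw : w ∈ betaLang β) :
    sharp w ∈ betaSigma β := by
  intro k
  refine ⟨fun i => ?_, fun l => ?_⟩
  · have h2 := two_le_ceil hβ
    by_cases hk : 1 ≤ k + i
    · obtain ⟨x, hx, k₀, h⟩ := exists_dom hw
      simp only
      rw [sharp_eq_getD _ hk]
      exact lt_of_le_of_lt (by exact_mod_cast h _) (hx.1 _)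
    · simp only
      rw [sharp_of_nonpos _ (by omega)]
      push_cast; omega
  · have := sharp_lexLe hβ hw (k + l)
    simpa [add_assoc] using this

lemma shiftZ_mem {β : ℝ} {x : ℤ → ℕ} (hx : x ∈ betaSigma β) (j : ℤ) :
    shiftZ j x ∈ betaSigma β := by
  intro k
  have h := hx (k + j)
  have he : (fun i : ℕ => shiftZ j x (k + i)) = fun i : ℕ => x (k + j + i) := by
    funext i
    simp only [shiftZ]
    ring_nf
  rw [he]; exact h

lemma betaSigma_subset {β : ℝ} : betaSigma β ⊆ fullShift (bA β) := by
  intro x hx i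
  have := (hx i).1 0
  simp only [Nat.cast_zero, add_zero] at this
  unfold bA
  omega

/-- The language is closed under lowering letters and under appending zeros. -/
lemma lang_mono {β : ℝ} (hβ : 1 < β) {w w' : List ℕ} (hw : w ∈ betaLang β)
    (h : ∀ i, w'.getD i 0 ≤ w.getD i 0) : w' ∈ betaLang β := by
  refine ⟨fun i => w'.getD i 0, ?_, 0, fun i _ => by simp⟩
  have h1 := sharp_mem hβ hw 1
  refine betaX_mono h1 fun i => ?_
  simp only [sharp_one_add]
  exact h i

lemma nil_mem_lang {β : ℝ} (hβ : 1 < β) : [] ∈ betaLang β := by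
  refine ⟨fun _ => 0, ⟨fun i => ?_, fun k => ?_⟩, 0, by simp⟩
  · have := two_le_ceil hβ
    simp only [Nat.cast_zero]
    omega
  · exact Or.inr ⟨0, by simp, betaC_pos hβ⟩

/-! ### Words without a suffix in `P^β` -/

lemma sfx_eq_nil_iff {β : ℝ} {w : List ℕ} :
    sfx β w = [] ↔ ∀ p < w.length, ∃ i, p + i < w.length ∧ w.getD (p + i) 0 ≠ betaC β i := by
  set S : Set ℕ := {ℓ | ℓ ≤ w.length ∧ w.drop (w.length - ℓ) ∈ betaPref β} with hS
  have hbdd : BddAbove S := ⟨w.length, fun ℓ h => h.1⟩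
  have h0 : (0 : ℕ) ∈ S := ⟨Nat.zero_le _, by simp [betaPref]⟩
  have hmem : sSup S ∈ S := Nat.sSup_mem ⟨0, h0⟩ hbdd
  have key : sfx β w = [] ↔ sSup S = 0 := by
    have := hmem.1
    unfold sfx sLen
    rw [← hS, List.drop_eq_nil_iff]
    omega
  have hgetD : ∀ p i, (w.drop p).getD i 0 = w.getD (p + i) 0 := by
    intro p i
    simp [List.getD_eq_getElem?_getD, List.getElem?_drop]
  rw [key]
  constructor
  · intro h p hp
    by_contra! hc
    have : w.length - p ∈ S := by
      refine ⟨Nat.sub_le _ _, fun i hi => ?_⟩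
      have e : w.length - (w.length - p) = p := by omega
      rw [e] at hi ⊢
      rw [List.length_drop] at hi
      rw [hgetD]
      exact hc i (by omega)
    have := le_csSup hbdd this
    omega
  · intro h
    by_contra hne
    obtain ⟨i, hi, hi'⟩ := h (w.length - sSup S) (by have := hmem.1; omega)
    apply hi'
    rw [← hgetD]
    exact hmem.2 i (by rw [List.length_drop]; omega)

/-- The word `w` with its `k`-th letter decreased by one. -/
def lower (k : ℕ) (w : List ℕ) : List ℕ := w.set k (w.getD k 0 - 1)

lemma lower_getD (k : ℕ) (w : List ℕ) (i : ℕ) :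
    (lower k w).getD i 0 = if i = k then w.getD k 0 - 1 else w.getD i 0 := by
  unfold lower
  simp only [List.getD_eq_getElem?_getD, List.getElem?_set]
  split_ifs with h1 h2 h3 h4 h5 <;> simp_all

lemma lower_length (k : ℕ) (w : List ℕ) : (lower k w).length = w.length := by simp [lower]

lemma lower_mem_lang {β : ℝ} (hβ : 1 < β) {w : List ℕ} (hw : w ∈ betaLang β) (k : ℕ) :
    lower k w ∈ betaLang β := by
  refine lang_mono hβ hw fun i => ?_
  rw [lower_getD]
  split_ifs with h
  · subst h; omega
  · exact le_rfl

/-- Decreasing the last nonzero letter of an admissible word leaves no suffix in `P^β`: a suffix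
containing the changed letter was `⪯ c^β` before and is strictly smaller afterwards, and a suffix of
zeros starts with a letter different from `c_1`. -/
lemma sfx_lower {β : ℝ} (hβ : 1 < β) {w : List ℕ} (hw : w ∈ betaLang β) {k : ℕ}
    (hk : k < w.length) (hk1 : 1 ≤ w.getD k 0) (hz : ∀ j, k < j → w.getD j 0 = 0) :
    sfx β (lower k w) = [] := by
  rw [sfx_eq_nil_iff]
  intro p hp
  rw [lower_length] at hp ⊢
  by_contra! hc
  simp only [lower_getD] at hc
  have hc0 := betaC_pos hβ
  by_cases hpk : k < p
  · have := hc 0 (by omega)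
    rw [add_zero, if_neg (by omega), hz p hpk] at this
    omega
  · have hlex := sharp_lexLe hβ hw (1 + p)
    have heq : (fun i : ℕ => sharp w (1 + p + i)) = fun i : ℕ => w.getD (p + i) 0 := by
      funext i
      rw [← sharp_one_add]; push_cast; ring_nf
    rw [heq] at hlex
    have hkc := hc (k - p) (by omega)
    have e : p + (k - p) = k := by omega
    rw [if_pos e] at hkc
    rcases hlex with h | ⟨i, hi, hi'⟩
    · have := congrFun h (k - p)
      simp only [e] at this
      omega
    · rcases lt_trichotomy i (k - p) with h | h | h
      · have := hc i (by omega)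
        rw [if_neg (by omega)] at this
        exact hi'.ne this
      · subst h
        simp only [e] at hi'
        omega
      · have := hi _ h
        simp only [e] at this
        omega

lemma append_zero_getD (w : List ℕ) (i : ℕ) : (w ++ [0]).getD i 0 = w.getD i 0 := by
  simp only [List.getD_eq_getElem?_getD, List.getElem?_append]
  split_ifs with h
  · rfl
  · rw [List.getElem?_eq_none (l := w) (by omega)]
    rcases Nat.eq_zero_or_pos (i - w.length) with h0 | h0
    · simp [h0]
    · rw [List.getElem?_eq_none (by simp; omega)]

lemma sfx_append_zero {β : ℝ} (hβ : 1 < β) {w : List ℕ} (hs : sfx β w = []) :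
    sfx β (w ++ [0]) = [] := by
  rw [sfx_eq_nil_iff] at hs ⊢
  intro p hp
  simp only [append_zero_getD, List.length_append, List.length_singleton] at hp ⊢
  by_cases h : p < w.length
  · obtain ⟨i, hi, hi'⟩ := hs p h
    exact ⟨i, by omega, hi'⟩
  · refine ⟨0, by omega, ?_⟩
    rw [List.getD_eq_default _ _ (by omega)]
    exact (betaC_pos hβ).ne

lemma sharp_append_zero (w : List ℕ) : sharp (w ++ [0]) = sharp w := by
  funext j
  by_cases hj : 1 ≤ j
  · rw [sharp_eq_getD _ hj, sharp_eq_getD _ hj, append_zero_getD]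
  · rw [sharp_of_nonpos _ (by omega), sharp_of_nonpos _ (by omega)]

lemma sfx_replicate {β : ℝ} (hβ : 1 < β) (m : ℕ) : sfx β (List.replicate m 0) = [] := by
  rw [sfx_eq_nil_iff]
  intro p hp
  refine ⟨0, by simpa using hp, ?_⟩
  have : (List.replicate m 0).getD (p + 0) 0 = 0 := by
    simp only [List.getD_eq_getElem?_getD, List.getElem?_replicate]
    split_ifs <;> rfl
  rw [this]
  exact (betaC_pos hβ).ne

/-! ### Oscillations -/

lemma abs_sub_le_osc {b : ℕ} {g : (ℤ → ℕ) → ℝ} {i : ℤ} (hfin : deltaOsc b g i ≠ ⊤)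
    {x y : ℤ → ℕ} (hx : x ∈ fullShift b) (hy : y ∈ fullShift b) (h : ∀ k, k ≠ i → x k = y k) :
    |g x - g y| ≤ (deltaOsc b g i).toReal := by
  rw [← ENNReal.ofReal_le_iff_le_toReal hfin]
  exact le_sSup ⟨x, hx, y, hy, h, rfl⟩

/-- Changing a finite set of sites one after the other. -/
lemma abs_sub_le_sum_osc {b : ℕ} {g : (ℤ → ℕ) → ℝ} (hfin : ∀ i, deltaOsc b g i ≠ ⊤)
    (S : Finset ℤ) : ∀ {x y : ℤ → ℕ}, x ∈ fullShift b → y ∈ fullShift b →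
    (∀ k, k ∉ S → x k = y k) → |g x - g y| ≤ ∑ i ∈ S, (deltaOsc b g i).toReal := by
  classical
  induction S using Finset.induction_on with
  | empty =>
    intro x y _ _ h
    have : x = y := funext fun k => h k (by simp)
    simp [this]
  | insert a S ha ih =>
    intro x y hx hy h
    rw [Finset.sum_insert ha]
    have hz : Function.update x a (y a) ∈ fullShift b := by
      intro i
      by_cases hi : i = a
      · subst hi; simpa using hy i
      · simpa [hi] using hx i
    have h1 : |g x - g (Function.update x a (y a))| ≤ _ :=
      abs_sub_le_osc (hfin a) hx hz fun k hk => by simp [hk]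
    have h2 := ih hz hy fun k hk => by
      by_cases hka : k = a
      · subst hka; simp
      · simpa [hka] using h k (by simp [hk, hka])
    exact (abs_sub_le _ _ _).trans (add_le_add h1 h2)

/-- The sum `∑_{j=1}^m φ(T^j w^♯)`. -/
def wordSum (φ : (ℤ → ℕ) → ℝ) (m : ℕ) (w : List ℕ) : ℝ :=
  ∑ j ∈ Finset.Icc (1 : ℤ) (m : ℤ), φ (shiftZ j (sharp w))

/-- A finite oscillation norm provides one constant `D` that bounds `φ` along the configurations
`T^j w^♯` and also the effect of lowering one letter of `w` on `∑_{j=1}^m φ(T^j w^♯)`: in the `j`-th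
summand the altered site is `k + 1 - j`, so the differences add up to at most `‖φ‖_δ`. -/
lemma exists_bound {β : ℝ} (hβ : 1 < β) {φ : (ℤ → ℕ) → ℝ} (hφδ : normDelta β φ ≠ ⊤) :
    ∃ D : ℝ, (∀ w ∈ betaLang β, ∀ j, |φ (shiftZ j (sharp w))| ≤ D) ∧
      ∀ w ∈ betaLang β, ∀ m k, wordSum φ m w ≤ wordSum φ m (lower k w) + D := by
  obtain ⟨⟨g, _, hg⟩, hgfin⟩ := iInf_lt_top.1 (lt_top_iff_ne_top.2 hφδ)
  simp only [normDeltaBar] at hgfin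
  have hfin : ∀ i, deltaOsc (bA β) g i ≠ ⊤ := ENNReal.ne_top_of_tsum_ne_top hgfin.ne
  set d : ℤ → ℝ := fun i => (deltaOsc (bA β) g i).toReal with hd
  have hsum : Summable d := ENNReal.summable_toReal hgfin.ne
  have hd0 : ∀ i, 0 ≤ d i := fun i => ENNReal.toReal_nonneg
  have hfs : ∀ w ∈ betaLang β, ∀ j, shiftZ j (sharp w) ∈ fullShift (bA β) := fun w hw j =>
    betaSigma_subset (shiftZ_mem (sharp_mem hβ hw) j)
  have heq : ∀ w ∈ betaLang β, ∀ j, φ (shiftZ j (sharp w)) = g (shiftZ j (sharp w)) :=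
    fun w hw j => (hg (shiftZ_mem (sharp_mem hβ hw) j)).symm
  have h0 : (fun _ => 0 : ℤ → ℕ) ∈ fullShift (bA β) := by
    intro i
    have := two_le_ceil hβ
    simp only [bA]
    omega
  refine ⟨|g fun _ => 0| + ∑' i, d i, fun w hw j => ?_, fun w hw m k => ?_⟩
  · rw [heq w hw]
    have h1 := abs_sub_le_sum_osc hfin (Finset.Icc (1 - j) (w.length - j)) (hfs w hw j) h0
      fun k hk => by
        simp only [shiftZ, sharp]
        rw [if_neg]
        simp only [Finset.mem_Icc] at hk
        omega
    have h2 := hsum.sum_le_tsum (Finset.Icc (1 - j) (w.length - j)) fun i _ => hd0 i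
    have h3 := abs_sub_abs_le_abs_sub (g (shiftZ j (sharp w))) (g fun _ => 0)
    linarith
  · have hw' := lower_mem_lang hβ hw k
    have h1 : wordSum φ m w - wordSum φ m (lower k w) ≤
        ∑ j ∈ Finset.Icc (1 : ℤ) m, d (k + 1 - j) := by
      unfold wordSum
      rw [← Finset.sum_sub_distrib]
      refine Finset.sum_le_sum fun j _ => ?_
      rw [heq w hw, heq _ hw']
      refine (le_abs_self _).trans (abs_sub_le_osc (hfin _) (hfs w hw j) (hfs _ hw' j) ?_)
      intro i hi
      simp only [shiftZ]
      by_cases hij : 1 ≤ i + j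
      · rw [sharp_eq_getD _ hij, sharp_eq_getD _ hij, lower_getD, if_neg]
        omega
      · rw [sharp_of_nonpos _ (by omega), sharp_of_nonpos _ (by omega)]
    have h2 : ∑ j ∈ Finset.Icc (1 : ℤ) m, d (k + 1 - j) ≤ ∑' i, d i := by
      have hinj : Set.InjOn (fun j : ℤ => (k : ℤ) + 1 - j) (Finset.Icc (1 : ℤ) m) := by
        intro a _ b _ hab
        simp only at hab
        omega
      rw [← Finset.sum_image (f := d) hinj]
      exact hsum.sum_le_tsum _ fun i _ => hd0 i
    have := abs_nonneg (g fun _ => 0)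
    linarith

/-! ### Partition functions -/

/-- The partition function `∑_{w ∈ A} exp(∑_{j=1}^m φ(T^j w^♯))` over a finite set of words. -/
def wordXi (φ : (ℤ → ℕ) → ℝ) (m : ℕ) (A : Finset (List ℕ)) : ℝ :=
  ∑ w ∈ A, Real.exp (wordSum φ m w)

/-- An element of `E^n` is a translate of `w^♯`, `w` being its word on `[-n, n]`. -/
lemma birkhoff_eq {φ : (ℤ → ℕ) → ℝ} {n : ℕ} {x : ℤ → ℕ}
    (hx : ∀ j : ℤ, (n : ℤ) < |j| → x j = 0) :
    birkhoff φ n x = wordSum φ (2 * n + 1) (wordOf n x) := by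
  have hget : ∀ i : ℕ, i < 2 * n + 1 → (wordOf n x).getD i 0 = x (-(n : ℤ) + i) := by
    intro i hi
    -- `wordOf` casts the whole list `List.range (2 * n + 1)` to integers, which unfolds to a `flatMap`
    have hmap : wordOf n x = (List.range (2 * n + 1)).map fun i : ℕ => x (-(n : ℤ) + i) := by
      simp [wordOf, ← List.map_eq_flatMap]
    simp [hmap, List.getD_eq_getElem?_getD, hi]
  have hlen : (wordOf n x).length = 2 * n + 1 := by simp [wordOf]
  have hxs : ∀ i : ℤ, x i = sharp (wordOf n x) (i + (n + 1)) := by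
    intro i
    unfold sharp
    rw [hlen]
    split_ifs with h
    · rw [hget _ (by omega)]
      congr 1; omega
    · apply hx
      rw [lt_abs]
      omega
  unfold birkhoff wordSum
  refine Finset.sum_bij' (fun j _ => j + (n + 1)) (fun j _ => j - (n + 1)) ?_ ?_ ?_ ?_ ?_
  · intro j hj
    simp only [Finset.mem_Icc] at hj ⊢
    push_cast
    omega
  · intro j hj
    simp only [Finset.mem_Icc] at hj ⊢
    push_cast at hj
    omega
  · intro j _; ring
  · intro j _; ring
  · intro j _
    congr 1
    funext i
    simp only [shiftZ]
    rw [hxs]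
    congr 1; ring

lemma XiAll_eq {β : ℝ} {φ : (ℤ → ℕ) → ℝ} {n : ℕ} {E : Finset (ℤ → ℕ)} (hE : IsEn β n E) :
    ∃ L : Finset (List ℕ), (L : Set (List ℕ)) = betaLangN β (2 * n + 1) ∧
      XiAll φ n E = wordXi φ (2 * n + 1) L := by
  classical
  refine ⟨E.image (wordOf n), ?_, ?_⟩
  · rw [Finset.coe_image, hE.2.2.image_eq]
  · unfold wordXi XiAll
    rw [Finset.sum_image hE.2.2.injOn]
    refine Finset.sum_congr rfl fun x hx => ?_
    rw [birkhoff_eq (hE.2.1 x hx)]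

/-- Appending a zero embeds the admissible words `w` of length `m` with `s(w) = ε` into those of
length `m + 1` and leaves `w^♯` unchanged. -/
lemma wordXi_succ {β : ℝ} (hβ : 1 < β) {φ : (ℤ → ℕ) → ℝ} {D : ℝ}
    (hD : ∀ w ∈ betaLang β, ∀ j, |φ (shiftZ j (sharp w))| ≤ D) {W : ℕ → Finset (List ℕ)}
    (hW : ∀ m w, w ∈ W m ↔ w ∈ betaLang β ∧ w.length = m ∧ sfx β w = []) (m : ℕ) :
    wordXi φ m (W m) ≤ Real.exp D * wordXi φ (m + 1) (W (m + 1)) := by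
  classical
  have hinj : Set.InjOn (fun w : List ℕ => w ++ [0]) (W m) :=
    fun a _ b _ hab => List.append_cancel_right hab
  have hsub : (W m).image (fun w => w ++ [0]) ⊆ W (m + 1) := by
    intro v hv
    obtain ⟨w, hw, rfl⟩ := Finset.mem_image.1 hv
    rw [hW] at hw ⊢
    exact ⟨lang_mono hβ hw.1 fun i => (append_zero_getD w i).le, by simp [hw.2.1],
      sfx_append_zero hβ hw.2.2⟩
  calc wordXi φ m (W m)
      ≤ ∑ w ∈ W m, Real.exp D * Real.exp (wordSum φ (m + 1) (w ++ [0])) := by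
        refine Finset.sum_le_sum fun w hw => ?_
        rw [← Real.exp_add, Real.exp_le_exp]
        have h1 := (abs_le.1 (hD w ((hW m w).1 hw).1 (m + 1))).1
        have h2 : wordSum φ (m + 1) (w ++ [0]) =
            wordSum φ m w + φ (shiftZ (m + 1) (sharp w)) := by
          unfold wordSum
          rw [sharp_append_zero]
          have : Finset.Icc (1 : ℤ) ((m + 1 : ℕ) : ℤ) =
              insert ((m : ℤ) + 1) (Finset.Icc (1 : ℤ) m) := by
            ext j
            simp only [Finset.mem_Icc, Finset.mem_insert]
            push_cast
            omega
          rw [this, Finset.sum_insert (by simp), add_comm]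
        linarith
    _ = Real.exp D * ∑ v ∈ (W m).image (fun w => w ++ [0]), Real.exp (wordSum φ (m + 1) v) := by
        rw [← Finset.mul_sum, Finset.sum_image hinj]
    _ ≤ Real.exp D * wordXi φ (m + 1) (W (m + 1)) := by
        refine mul_le_mul_of_nonneg_left ?_ (Real.exp_pos _).le
        exact Finset.sum_le_sum_of_subset_of_nonneg hsub fun _ _ _ => (Real.exp_pos _).le

/-- The map decreasing the last nonzero letter is injective on the words whose last nonzero letter
sits at a given place, so restricting to `s(w) = ε` costs only a factor linear in `m`. -/
lemma wordXi_le {β : ℝ} (hβ : 1 < β) {φ : (ℤ → ℕ) → ℝ} {D : ℝ} {m : ℕ}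
    (hD : ∀ w ∈ betaLang β, ∀ m k, wordSum φ m w ≤ wordSum φ m (lower k w) + D)
    {L W : Finset (List ℕ)} (hL : ∀ w, w ∈ L ↔ w ∈ betaLang β ∧ w.length = m)
    (hW : ∀ w, w ∈ W ↔ w ∈ betaLang β ∧ w.length = m ∧ sfx β w = []) :
    wordXi φ m L ≤ (1 + m * Real.exp D) * wordXi φ m W := by
  classical
  set F : ℕ → Finset (List ℕ) := fun k =>
    {w ∈ L | 1 ≤ w.getD k 0 ∧ ∀ j, k < j → w.getD j 0 = 0} with hF
  have hlt : ∀ k, ∀ w ∈ F k, k < w.length := by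
    intro k w hw
    by_contra hk
    have := (Finset.mem_filter.1 hw).2.1
    rw [List.getD_eq_default _ _ (by omega)] at this
    omega
  have hFk : ∀ k, wordXi φ m (F k) ≤ Real.exp D * wordXi φ m W := by
    intro k
    have hinj : Set.InjOn (lower k) (F k) := by
      intro a ha b hb hab
      have ha' := (Finset.mem_filter.1 ha).2.1
      have hb' := (Finset.mem_filter.1 hb).2.1
      have hlen : a.length = b.length := by rw [← lower_length k a, hab, lower_length]
      refine List.ext_getElem hlen fun i h1 h2 => ?_
      have := congrArg (fun l : List ℕ => l.getD i 0) hab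
      simp only [lower_getD] at this
      rw [← List.getD_eq_getElem (d := 0), ← List.getD_eq_getElem (d := 0)]
      split_ifs at this with h
      · subst h; omega
      · exact this
    have hsub : (F k).image (lower k) ⊆ W := by
      intro v hv
      obtain ⟨w, hw, rfl⟩ := Finset.mem_image.1 hv
      obtain ⟨hwL, h1, h2⟩ := Finset.mem_filter.1 hw
      rw [hL] at hwL
      rw [hW]
      exact ⟨lower_mem_lang hβ hwL.1 k, by rw [lower_length, hwL.2],
        sfx_lower hβ hwL.1 (hlt k w hw) h1 h2⟩
    calc wordXi φ m (F k) ≤ ∑ w ∈ F k, Real.exp D * Real.exp (wordSum φ m (lower k w)) := by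
          refine Finset.sum_le_sum fun w hw => ?_
          rw [← Real.exp_add, Real.exp_le_exp]
          have := hD w ((hL w).1 (Finset.mem_filter.1 hw).1).1 m k
          linarith
      _ = Real.exp D * ∑ v ∈ (F k).image (lower k), Real.exp (wordSum φ m v) := by
          rw [← Finset.mul_sum, Finset.sum_image hinj]
      _ ≤ Real.exp D * wordXi φ m W := by
          refine mul_le_mul_of_nonneg_left ?_ (Real.exp_pos _).le
          exact Finset.sum_le_sum_of_subset_of_nonneg hsub fun _ _ _ => (Real.exp_pos _).le
  have hdisj : ∀ a b, a ≠ b → Disjoint (F a) (F b) := by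
    intro a b hab
    rw [Finset.disjoint_left]
    intro w ha hb
    have ha' := (Finset.mem_filter.1 ha).2
    have hb' := (Finset.mem_filter.1 hb).2
    rcases lt_or_gt_of_ne hab with h | h
    · have := ha'.2 b h
      omega
    · have := hb'.2 a h
      omega
  -- every word is zero or has a last nonzero letter
  have hcover : L ⊆ W ∪ (Finset.range m).biUnion F := by
    intro w hw
    have hwL := (hL w).1 hw
    rw [Finset.mem_union]
    by_cases hz : ∀ i, w.getD i 0 = 0
    · left
      rw [hW]
      refine ⟨hwL.1, hwL.2, sfx_eq_nil_iff.2 fun p hp => ⟨0, by omega, ?_⟩⟩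
      rw [hz]
      exact (betaC_pos hβ).ne
    · right
      push Not at hz
      obtain ⟨i, hi⟩ := hz
      have hb : ∀ j, w.getD j 0 ≠ 0 → j ≤ m := by
        intro j hj
        by_contra hjm
        exact hj (List.getD_eq_default _ _ (by omega))
      set k := Nat.findGreatest (fun j => w.getD j 0 ≠ 0) m with hk
      have hk0 : w.getD k 0 ≠ 0 :=
        Nat.findGreatest_spec (P := fun j => w.getD j 0 ≠ 0) (hb i hi) hi
      have hwF : w ∈ F k := by
        refine Finset.mem_filter.2 ⟨hw, by omega, fun j hj => ?_⟩
        by_contra hj0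
        have := Nat.le_findGreatest (P := fun j => w.getD j 0 ≠ 0) (hb j hj0) hj0
        omega
      refine Finset.mem_biUnion.2 ⟨k, ?_, hwF⟩
      rw [Finset.mem_range, ← hwL.2]
      exact hlt k w hwF
  calc wordXi φ m L ≤ ∑ w ∈ W ∪ (Finset.range m).biUnion F, Real.exp (wordSum φ m w) :=
        Finset.sum_le_sum_of_subset_of_nonneg hcover fun _ _ _ => (Real.exp_pos _).le
    _ ≤ wordXi φ m W + ∑ w ∈ (Finset.range m).biUnion F, Real.exp (wordSum φ m w) := by
        unfold wordXi
        rw [← Finset.sum_union_inter]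
        have : 0 ≤ ∑ w ∈ W ∩ (Finset.range m).biUnion F, Real.exp (wordSum φ m w) :=
          Finset.sum_nonneg fun _ _ => (Real.exp_pos _).le
        linarith
    _ ≤ wordXi φ m W + ∑ k ∈ Finset.range m, wordXi φ m (F k) := by
        rw [Finset.sum_biUnion fun a _ b _ hab => hdisj a b hab]
        rfl
    _ ≤ wordXi φ m W + ∑ k ∈ Finset.range m, Real.exp D * wordXi φ m W := by
        gcongr with k _
        exact hFk k
    _ = (1 + m * Real.exp D) * wordXi φ m W := by
        rw [Finset.sum_const, Finset.card_range, nsmul_eq_mul]; ring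

/-! ### Passage to the limit -/

/-- If `a n / (2 n + 1) → P`, and `2 r(m) + 1` is within distance one of `m`, then
`a (r m) / m → P`. -/
lemma tendsto_reindex {a : ℕ → ℝ} {P : ℝ}
    (h : Tendsto (fun n : ℕ => (2 * (n : ℝ) + 1)⁻¹ * a n) atTop (nhds P)) {r : ℕ → ℕ}
    (hr : ∀ m, m ≤ 2 * r m + 2 ∧ 2 * r m ≤ m) :
    Tendsto (fun m : ℕ => (m : ℝ)⁻¹ * a (r m)) atTop (nhds P) := by
  have hrt : Tendsto r atTop atTop := by
    refine tendsto_atTop.2 fun b => ?_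
    filter_upwards [eventually_ge_atTop (2 * b + 2)] with m hm
    have := hr m
    omega
  have hinv : Tendsto (fun m : ℕ => (m : ℝ)⁻¹) atTop (nhds 0) :=
    tendsto_inv_atTop_nhds_zero_nat
  have hratio : Tendsto (fun m : ℕ => (m : ℝ)⁻¹ * (2 * (r m : ℝ) + 1)) atTop (nhds 1) := by
    have hlow : Tendsto (fun m : ℕ => 1 - (m : ℝ)⁻¹) atTop (nhds 1) := by
      simpa using hinv.const_sub 1
    have hup : Tendsto (fun m : ℕ => 1 + (m : ℝ)⁻¹) atTop (nhds 1) := by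
      simpa using hinv.const_add 1
    refine tendsto_of_tendsto_of_tendsto_of_le_of_le' hlow hup ?_ ?_ <;>
      filter_upwards [eventually_gt_atTop 0] with m hm
    all_goals
      have hm' : (0 : ℝ) < m := by exact_mod_cast hm
      have e : (m : ℝ)⁻¹ * m = 1 := inv_mul_cancel₀ hm'.ne'
      have hi : (0 : ℝ) ≤ (m : ℝ)⁻¹ := by positivity
      have h1 : (m : ℝ) ≤ 2 * r m + 2 := by exact_mod_cast (hr m).1
      have h2 : (2 : ℝ) * r m ≤ m := by exact_mod_cast (hr m).2
      nlinarith
  have := hratio.mul (h.comp hrt)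
  rw [one_mul] at this
  refine this.congr fun m => ?_
  have hne : (2 * (r m : ℝ) + 1) ≠ 0 := by positivity
  simp only [Function.comp_apply]
  rw [mul_assoc, mul_inv_cancel_left₀ hne]

lemma tendsto_log_linear (c : ℝ) (hc : 0 < c) :
    Tendsto (fun m : ℕ => (m : ℝ)⁻¹ * Real.log (1 + m * c)) atTop (nhds 0) := by
  have h1 : Tendsto (fun m : ℕ => Real.log m / m) atTop (nhds 0) :=
    (Real.isLittleO_log_id_atTop.tendsto_div_nhds_zero).comp tendsto_natCast_atTop_atTop
  have h2 : Tendsto (fun m : ℕ => (m : ℝ)⁻¹ * Real.log (1 + c)) atTop (nhds 0) := by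
    simpa using tendsto_inv_atTop_nhds_zero_nat.mul_const (Real.log (1 + c))
  have h3 := h1.add h2
  rw [add_zero] at h3
  refine squeeze_zero' ?_ ?_ h3
  · filter_upwards with m
    exact mul_nonneg (by positivity) (Real.log_nonneg (by
      have : 0 ≤ (m : ℝ) * c := by positivity
      linarith))
  · filter_upwards [eventually_ge_atTop 1] with m hm
    have hm' : (1 : ℝ) ≤ m := by exact_mod_cast hm
    have hpos : 0 < (m : ℝ) := by linarith
    rw [div_eq_inv_mul, ← mul_add, ← Real.log_mul hpos.ne' (by linarith)]
    refine mul_le_mul_of_nonneg_left ?_ (by positivity)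
    exact Real.log_le_log (by positivity) (by nlinarith)

/-- Lemma 5: the pressure equals
`lim_m (1/m) ln ∑_{w ∈ L^β_m : s(w)=ε} exp(∑_{j=1}^m φ(T^j w^♯))`. -/
theorem stmt8 (β : ℝ) (hβ : 1 < β) (hβℕ : ∀ N : ℕ, (N : ℝ) ≠ β)
    (φ : (ℤ → ℕ) → ℝ) (hφc : ContinuousOn φ (betaSigma β)) (hφδ : normDelta β φ ≠ ⊤)
    (E : ℕ → Finset (ℤ → ℕ)) (hE : ∀ n, IsEn β n (E n))
    (P : ℝ) (hP : Tendsto (pressureSeq φ E) atTop (nhds P))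
    (W : ℕ → Finset (List ℕ))
    (hW : ∀ m, (W m : Set (List ℕ)) = {w | w ∈ betaLang β ∧ w.length = m ∧ sfx β w = []}) :
    Tendsto (fun m : ℕ => (m : ℝ)⁻¹ * Real.log (∑ w ∈ W m,
        Real.exp (∑ j ∈ Finset.Icc (1 : ℤ) (m : ℤ), φ (shiftZ j (sharp w)))))
      atTop (nhds P) := by
  have hWm : ∀ m w, w ∈ W m ↔ w ∈ betaLang β ∧ w.length = m ∧ sfx β w = [] := by
    intro m w
    rw [← Finset.mem_coe, hW m]
    rfl
  change Tendsto (fun m : ℕ => (m : ℝ)⁻¹ * Real.log (wordXi φ m (W m))) atTop (nhds P)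
  obtain ⟨D, hD1, hD2⟩ := exists_bound hβ hφδ
  have hD0 : 0 ≤ D := (abs_nonneg _).trans (hD1 [] (nil_mem_lang hβ) 0)
  set Z : ℕ → ℝ := fun m => wordXi φ m (W m) with hZ
  set X : ℕ → ℝ := fun n => XiAll φ n (E n) with hX
  have hZpos : ∀ m, 0 < Z m := by
    intro m
    refine Finset.sum_pos (fun _ _ => Real.exp_pos _) ⟨List.replicate m 0, ?_⟩
    rw [hWm]
    refine ⟨lang_mono hβ (nil_mem_lang hβ) fun i => ?_, by simp, sfx_replicate hβ m⟩
    simp only [List.getD_eq_getElem?_getD, List.getElem?_replicate]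
    split_ifs <;> simp
  have hZX : ∀ n, Z (2 * n + 1) ≤ X n := by
    intro n
    obtain ⟨L, hL, hXi⟩ := XiAll_eq (φ := φ) (hE n)
    simp only [hX, hXi]
    refine Finset.sum_le_sum_of_subset_of_nonneg (fun w hw => ?_) fun _ _ _ => (Real.exp_pos _).le
    rw [hWm] at hw
    rw [← Finset.mem_coe, hL]
    exact ⟨hw.1, hw.2.1⟩
  have hXZ : ∀ n, X n ≤ (1 + (2 * n + 1 : ℕ) * Real.exp D) * Z (2 * n + 1) := by
    intro n
    obtain ⟨L, hL, hXi⟩ := XiAll_eq (φ := φ) (hE n)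
    simp only [hX, hXi]
    refine wordXi_le hβ hD2 (fun w => ?_) (hWm _)
    rw [← Finset.mem_coe, hL]
    rfl
  have hXpos : ∀ n, 0 < X n := fun n => (hZpos _).trans_le (hZX n)
  have hsucc : ∀ m, Real.log (Z m) ≤ D + Real.log (Z (m + 1)) := by
    intro m
    rw [← Real.log_exp D, ← Real.log_mul (Real.exp_pos D).ne' (hZpos _).ne']
    exact Real.log_le_log (hZpos m) (wordXi_succ hβ hD1 hWm m)
  have hlog1 : ∀ n, Real.log (Z (2 * n + 1)) ≤ Real.log (X n) := fun n =>
    Real.log_le_log (hZpos _) (hZX n)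
  have hlog2 : ∀ n, Real.log (X n) ≤
      Real.log (1 + (2 * n + 1 : ℕ) * Real.exp D) + Real.log (Z (2 * n + 1)) := by
    intro n
    rw [← Real.log_mul (by positivity) (hZpos _).ne']
    exact Real.log_le_log (hXpos n) (hXZ n)
  have hup : ∀ m, Real.log (Z m) ≤ D + Real.log (X (m / 2)) := by
    intro m
    have h1 := hlog1 (m / 2)
    rcases Nat.even_or_odd' m with ⟨k, rfl | rfl⟩
    · have e : 2 * k / 2 = k := by omega
      rw [e] at h1 ⊢
      linarith [hsucc (2 * k)]
    · have e : (2 * k + 1) / 2 = k := by omega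
      rw [e] at h1 ⊢
      linarith
  have hlow : ∀ m, 1 ≤ m → Real.log (X ((m - 1) / 2)) - D -
      Real.log (1 + m * Real.exp D) ≤ Real.log (Z m) := by
    intro m hm
    have h2 := hlog2 ((m - 1) / 2)
    have hmono : Real.log (1 + (2 * ((m - 1) / 2) + 1 : ℕ) * Real.exp D) ≤
        Real.log (1 + m * Real.exp D) := by
      refine Real.log_le_log (by positivity) ?_
      gcongr
      omega
    rcases Nat.even_or_odd' m with ⟨k, hk | hk⟩
    · have h3 := hsucc (2 * ((m - 1) / 2) + 1)
      have e : 2 * ((m - 1) / 2) + 1 + 1 = m := by omega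
      rw [e] at h3
      linarith
    · have e : 2 * ((m - 1) / 2) + 1 = m := by omega
      rw [e] at h2 hmono
      linarith
  have hP' : Tendsto (fun n : ℕ => (2 * (n : ℝ) + 1)⁻¹ * Real.log (X n)) atTop (nhds P) := hP
  have hDlim : Tendsto (fun m : ℕ => (m : ℝ)⁻¹ * D) atTop (nhds 0) := by
    simpa using tendsto_inv_atTop_nhds_zero_nat.mul_const D
  have hU := hDlim.add (tendsto_reindex hP' (r := fun m => m / 2) fun m => by omega)
  have hLo := ((tendsto_reindex hP' (r := fun m => (m - 1) / 2) fun m => by omega).sub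
    hDlim).sub (tendsto_log_linear (Real.exp D) (Real.exp_pos D))
  rw [zero_add] at hU
  rw [sub_zero, sub_zero] at hLo
  refine tendsto_of_tendsto_of_tendsto_of_le_of_le' hLo hU ?_ ?_
  · filter_upwards [eventually_ge_atTop 1] with m hm
    have := mul_le_mul_of_nonneg_left (hlow m hm) (inv_nonneg.2 (Nat.cast_nonneg (α := ℝ) m))
    linarith
  · filter_upwards with m
    have := mul_le_mul_of_nonneg_left (hup m) (inv_nonneg.2 (Nat.cast_nonneg (α := ℝ) m))
    linarith


end
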